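/- Let f : A → A be an area preserving reversible homeomorphism of the closed annulus A. If f has a periodic point (some z ∈ A and integer k ≥ 1 with f^k(z) = z), then f has an interior symmetric periodic point, i.e., a point z in the interior Å with f^k(z) = z and f^ℓ(z) = I(z) for some integers k, ℓ ≥ 1. -/

import Mathlib

open MeasureTheory Set

noncomputable section

/-- The reflection `I(x,y) = (-x,y)` on the plane. -/
def refl2 : ℝ × ℝ → ℝ × ℝ := fun p => (-p.1, p.2)

/-- The Euclidean norm `|z| = √(x² + y²)` on `ℝ²`. -/
def enorm2 (p : ℝ × ℝ) : ℝ := Real.sqrt (p.1 ^ 2 + p.2 ^ 2)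

/-- The closed annulus `A = {z : 1 ≤ |z| ≤ 2}`. -/
def annulus : Set (ℝ × ℝ) := {p | 1 ≤ enorm2 p ∧ enorm2 p ≤ 2}

/-- The open annulus `Å = {z : 1 < |z| < 2}`, the interior of `A`. -/
def annulusInt : Set (ℝ × ℝ) := {p | 1 < enorm2 p ∧ enorm2 p < 2}

lemma enorm2_refl2 (p : ℝ × ℝ) : enorm2 (refl2 p) = enorm2 p := by
  simp [enorm2, refl2, neg_sq]

lemma refl2_mem_annulus {p : ℝ × ℝ} (h : p ∈ annulus) : refl2 p ∈ annulus := by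
  simpa [annulus, enorm2_refl2] using h

/-- The restriction `I_A` of the reflection to the closed annulus. -/
def IA : annulus → annulus := fun z => ⟨refl2 z, refl2_mem_annulus z.2⟩


open Function

/-! Lift a suitable even iterate of `f` to a map `g` of the strip `ℝ × [1,2]` which has a fixed
point, commutes with the unit translation `T` and is reversed by `R(θ, r) = (-θ, r)`. Suppose that
no interior point of the segment `{0} × [1,2]` is ever mapped by an iterate of `g` to an integral
angle. Then `g` moves the whole segment weakly to one side, say to the right, and reversibility
makes `g` preserve the right half strip. No `T⁻¹ ∘ gᵐ` can do the same, as it translates a lift of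
the fixed point to the left; so `T⁻¹ ∘ gᵐ` preserves the left half strip. Hence a point of the
nonempty open set of points crossing the segment from left to right under `g` stays at angle less
than one forever, which forbids it to return to that set modulo `T`, against recurrence. So some
interior point `x` of the fixed segment of the reflection has an iterate `fᴺ x` that is fixed by the
reflection, and reversibility yields `f²ᴺ x = x`. -/

/-- `f` is reversible with respect to `ι`: for bijective `f` this says `f ∘ ι = ι ∘ f⁻¹`, written
without the inverse. -/
def IsReversible {α : Type*} (ι f : α → α) : Prop := ∀ x, f (ι (f x)) = ι x

namespace IsReversible

variable {α : Type*} {ι f : α → α}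

lemma iterate (h : IsReversible ι f) (n : ℕ) : IsReversible ι f^[n] := by
  induction n with
  | zero => exact fun _ => rfl
  | succ n ih =>
    intro x
    rw [iterate_succ_apply, iterate_succ_apply', h, ih]

lemma conj (h : IsReversible ι f) (hι : Involutive ι) : IsReversible ι (ι ∘ f ∘ ι) := fun x => by
  simp only [comp_apply, hι _, h _]

lemma isPeriodicPt_add_self (h : IsReversible ι f) {n : ℕ} {x : α} (hx : IsFixedPt ι x)
    (hfx : IsFixedPt ι (f^[n] x)) : IsPeriodicPt f (n + n) x := by
  have hsymm := h.iterate n x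
  rw [hfx.eq, hx.eq] at hsymm
  rwa [IsPeriodicPt, IsFixedPt, iterate_add_apply]

end IsReversible

lemma forall_le_or_forall_ge_of_dense_of_ne {X R : Type*} [TopologicalSpace X] [LinearOrder R]
    [TopologicalSpace R] [OrderClosedTopology R] {S : Set X} (hS : IsPreconnected S)
    (hdense : Dense S) {u : X → R} (hu : Continuous u) {c : R} (hne : ∀ x ∈ S, u x ≠ c) :
    (∀ x, c ≤ u x) ∨ ∀ x, u x ≤ c := by
  by_contra! ⟨hlt, hgt⟩
  obtain ⟨x, hxS, hx⟩ := hdense.exists_mem_open (isOpen_Iio.preimage hu) hlt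
  obtain ⟨y, hyS, hy⟩ := hdense.exists_mem_open (isOpen_Ioi.preimage hu) hgt
  obtain ⟨z, hzS, hz⟩ := hS.intermediate_value hxS hyS hu.continuousOn ⟨hx.le, hy.le⟩
  exact hne z hzS hz

/-! ### Reversible dynamics on a strip -/

/-- The strip `ℝ × Y` of angles, measured in full turns, and heights; for `Y = [1,2]` it is the
universal cover of the closed annulus. -/
abbrev Strip (Y : Type*) : Type _ := ℝ × Y

namespace Strip

variable {Y : Type*}

/-- The deck transformation of the strip by `n` full turns. -/
def shift (n : ℤ) (x : Strip Y) : Strip Y := (x.1 + n, x.2)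

/-- The lift of the reflection that fixes the axis `{0} × Y`. -/
def mirror (x : Strip Y) : Strip Y := (-x.1, x.2)

/-- Every nonempty open set returns to itself under `g`, up to deck transformations: the map induced
by `g` on the quotient by the deck group has no wandering open set. -/
def IsNonwandering [TopologicalSpace Y] (g : Strip Y → Strip Y) : Prop :=
  ∀ U : Set (Strip Y), IsOpen U → U.Nonempty → ∃ x ∈ U, ∃ m ≠ 0, ∃ n : ℤ, shift n (g^[m] x) ∈ U

@[simp] lemma shift_fst (n : ℤ) (x : Strip Y) : (shift n x).1 = x.1 + n := rfl

@[simp] lemma mirror_fst (x : Strip Y) : (mirror x).1 = -x.1 := rfl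

@[simp] lemma mirror_axis (y : Y) : mirror ((0, y) : Strip Y) = (0, y) := by simp [mirror]

@[simp] lemma shift_zero (x : Strip Y) : shift 0 x = x := by simp [shift]

lemma involutive_mirror : Involutive (mirror : Strip Y → Strip Y) := fun x => by simp [mirror]

@[simp] lemma mirror_mirror (x : Strip Y) : mirror (mirror x) = x := involutive_mirror x

lemma shift_shift (m n : ℤ) (x : Strip Y) : shift m (shift n x) = shift (m + n) x := by
  simp only [shift, Int.cast_add, Prod.mk.injEq, and_true]
  ring

lemma mirror_shift (n : ℤ) (x : Strip Y) : mirror (shift n x) = shift (-n) (mirror x) := by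
  simp only [shift, mirror, Int.cast_neg, Prod.mk.injEq, and_true]
  ring

lemma shift_left_injective (x : Strip Y) : Injective fun n : ℤ => shift n x := by
  intro m n h
  simpa [shift] using h

lemma mirror_iterate_conj (g : Strip Y → Strip Y) (m : ℕ) (x : Strip Y) :
    (mirror ∘ g ∘ mirror)^[m] x = mirror (g^[m] (mirror x)) := by
  have hsemi : Semiconj mirror g (mirror ∘ g ∘ mirror) := fun x => by simp
  simpa using (hsemi.iterate_right m (mirror x)).symm

section Topology

variable [TopologicalSpace Y]

lemma continuous_shift (n : ℤ) : Continuous (shift n : Strip Y → Strip Y) := by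
  unfold shift
  fun_prop

lemma continuous_mirror : Continuous (mirror : Strip Y → Strip Y) := by
  unfold mirror
  fun_prop

lemma IsNonwandering.conj_mirror {g : Strip Y → Strip Y} (hg : IsNonwandering g) :
    IsNonwandering (mirror ∘ g ∘ mirror) := by
  intro U hU hne
  obtain ⟨x, hx, m, hm, n, hret⟩ := hg (mirror ⁻¹' U) (hU.preimage continuous_mirror)
    (hne.preimage involutive_mirror.surjective)
  refine ⟨mirror x, hx, m, hm, -n, ?_⟩
  rwa [mirror_iterate_conj, mirror_mirror, ← mirror_shift]

end Topology

end Strip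

open Strip

/-- `g` has the properties shared by the lifts to the strip of reversible maps of the annulus
homotopic to the identity. -/
structure IsReversibleLift {Y : Type*} [TopologicalSpace Y] (g : Strip Y → Strip Y) : Prop where
  continuous : Continuous g
  commute_shift : ∀ n, Function.Commute g (shift n)
  isReversible : IsReversible mirror g

namespace IsReversibleLift

variable {Y : Type*} [TopologicalSpace Y] {g : Strip Y → Strip Y}

lemma iterate (hg : IsReversibleLift g) (m : ℕ) : IsReversibleLift g^[m] where
  continuous := hg.continuous.iterate m
  commute_shift n := (hg.commute_shift n).iterate_left m
  isReversible := hg.isReversible.iterate m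

lemma shift_comp (hg : IsReversibleLift g) (n : ℤ) : IsReversibleLift (shift n ∘ g) where
  continuous := (continuous_shift n).comp hg.continuous
  commute_shift m x := by
    simp only [comp_apply, (hg.commute_shift m).eq x, shift_shift, add_comm]
  isReversible x := by
    simp only [comp_apply, mirror_shift, (hg.commute_shift _).eq _, hg.isReversible x,
      shift_shift, add_neg_cancel, shift_zero]

lemma conj_mirror (hg : IsReversibleLift g) : IsReversibleLift (mirror ∘ g ∘ mirror) where
  continuous := continuous_mirror.comp (hg.continuous.comp continuous_mirror)
  commute_shift n x := by
    simp only [comp_apply, mirror_shift, (hg.commute_shift _).eq _, neg_neg]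
  isReversible := hg.isReversible.conj involutive_mirror

lemma fst_pos_of_axis_nonneg (hg : IsReversibleLift g) (haxis : ∀ y, 0 ≤ (g (0, y)).1)
    {x : Strip Y} (hx : 0 < x.1) : 0 < (g x).1 := by
  have hne : ∀ t > 0, (g (t, x.2)).1 ≠ 0 := by
    intro t ht hzero
    have hrev := congrArg Prod.fst (hg.isReversible (t, x.2))
    have hmirror : mirror (g (t, x.2)) = (0, (g (t, x.2)).2) := by simp [mirror, hzero]
    rw [hmirror, mirror_fst] at hrev
    linarith [haxis (g (t, x.2)).2]
  have hone : 1 ≤ (g (1, x.2)).1 := by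
    have hshift := congrArg Prod.fst ((hg.commute_shift 1).eq (0, x.2))
    simp only [shift, zero_add, Int.cast_one] at hshift
    linarith [haxis x.2]
  by_contra! hle
  have hcont : Continuous fun t : ℝ => (g (t, x.2)).1 := by
    have := hg.continuous
    fun_prop
  obtain ⟨t, ht, hzero⟩ := isPreconnected_Ioi.intermediate_value (mem_Ioi.2 hx)
    (mem_Ioi.2 one_pos) hcont.continuousOn ⟨hle, zero_le_one.trans hone⟩
  exact hne t ht hzero

lemma fst_neg_of_axis_nonpos (hg : IsReversibleLift g) (haxis : ∀ y, (g (0, y)).1 ≤ 0)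
    {x : Strip Y} (hx : x.1 < 0) : (g x).1 < 0 := by
  simpa using hg.conj_mirror.fst_pos_of_axis_nonneg (x := mirror x) (by simpa using haxis)
    (by simpa using hx)

lemma not_forall_one_le_axis (hg : IsReversibleLift g) {z : Strip Y} (hz : IsFixedPt g z) :
    ¬ ∀ y, 1 ≤ (g (0, y)).1 := by
  intro haxis
  have hshift := hg.shift_comp (-1)
  have hnonneg : ∀ x : Strip Y, 0 ≤ x.1 → 0 ≤ (g x).1 - 1 := by
    rintro ⟨t, y⟩ ht
    obtain rfl | hpos := (show 0 ≤ t from ht).eq_or_lt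
    · linarith [haxis y]
    · simpa [sub_eq_add_neg] using (hshift.fst_pos_of_axis_nonneg
        (fun y => by simpa using haxis y) hpos).le
  have hfix : g (shift (-⌊z.1⌋) z) = shift (-⌊z.1⌋) z := by
    rw [(hg.commute_shift _).eq, hz.eq]
  have hfract : (shift (-⌊z.1⌋) z).1 = Int.fract z.1 := by simp [Int.fract, sub_eq_add_neg]
  have hle := hnonneg (shift (-⌊z.1⌋) z) (hfract ▸ Int.fract_nonneg _)
  rw [hfix, hfract] at hle
  linarith [Int.fract_lt_one z.1]

lemma fst_lt_one_of_axis_ne_one (hg : IsReversibleLift g) {S : Set Y} (hS : IsPreconnected S)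
    (hdense : Dense S) {z : Strip Y} (hz : IsFixedPt g z) (hne : ∀ y ∈ S, (g (0, y)).1 ≠ 1)
    {x : Strip Y} (hx : x.1 < 0) : (g x).1 < 1 := by
  have hcont : Continuous fun y => (g (0, y)).1 := by
    have := hg.continuous
    fun_prop
  have haxis := (forall_le_or_forall_ge_of_dense_of_ne hS hdense hcont hne).resolve_left
    (hg.not_forall_one_le_axis hz)
  simpa using (hg.shift_comp (-1)).fst_neg_of_axis_nonpos (by simpa using haxis) hx

lemma exists_axis_return_of_axis_nonneg (hg : IsReversibleLift g) (hrec : IsNonwandering g)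
    {S : Set Y} (hS : IsPreconnected S) (hdense : Dense S) {z : Strip Y} (hz : IsFixedPt g z)
    (haxis : ∀ y, 0 ≤ (g (0, y)).1) :
    ∃ y ∈ S, ∃ m ≠ 0, ∃ n : ℤ, (g^[m] (0, y)).1 = n := by
  by_contra! hne
  let crossing : Set (Strip Y) := {x | x.1 < 0 ∧ 0 < (g x).1}
  have hopen : IsOpen crossing := (isOpen_lt continuous_fst continuous_const).inter
    (isOpen_lt continuous_const (continuous_fst.comp hg.continuous))
  have hnonempty : crossing.Nonempty := by
    have : Nonempty Y := ⟨z.2⟩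
    obtain ⟨y, hy⟩ := hdense.nonempty
    have hpos : 0 < (g (0, y)).1 := (haxis y).lt_of_ne' (by simpa using hne y hy 1 one_ne_zero 0)
    have hcont : Continuous fun t : ℝ => (g (t, y)).1 := by
      have := hg.continuous
      fun_prop
    have hnear : ∀ᶠ t in nhdsWithin (0 : ℝ) (Iio 0), 0 < (g (t, y)).1 :=
      nhdsWithin_le_nhds (hcont.continuousAt.eventually (lt_mem_nhds hpos))
    obtain ⟨t, htpos, ht⟩ := (hnear.and self_mem_nhdsWithin).exists
    exact ⟨(t, y), ht, htpos⟩
  have hright : ∀ m x, 0 < x.1 → 0 < (g^[m] x).1 := fun m =>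
    MapsTo.iterate (s := {x : Strip Y | 0 < x.1}) (fun _ => hg.fst_pos_of_axis_nonneg haxis) m
  have hltOne : ∀ m ≠ 0, ∀ x, x.1 < 0 → (g^[m] x).1 < 1 := fun m hm x hx =>
    (hg.iterate m).fst_lt_one_of_axis_ne_one hS hdense (hz.iterate m)
      (fun y hy => by simpa using hne y hy m hm 1) hx
  obtain ⟨x, ⟨hx, hgx⟩, m, hm, n, hleft, hcross⟩ := hrec crossing hopen hnonempty
  obtain ⟨m, rfl⟩ := Nat.exists_eq_succ_of_ne_zero hm
  rw [shift_fst, iterate_succ_apply] at hleft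
  rw [(hg.commute_shift n).eq, shift_fst, ← iterate_succ_apply' g] at hcross
  have hn : (n : ℝ) ≤ -1 := by
    have hneg : (n : ℝ) < 0 := by linarith [hright m (g x) hgx]
    exact_mod_cast Int.le_sub_one_of_lt (by exact_mod_cast hneg : n < 0)
  linarith [hltOne _ (Nat.succ_ne_zero (m + 1)) x hx]

theorem exists_axis_return (hg : IsReversibleLift g) (hrec : IsNonwandering g) {S : Set Y}
    (hS : IsPreconnected S) (hdense : Dense S) {z : Strip Y} (hz : IsFixedPt g z) :
    ∃ y ∈ S, ∃ m ≠ 0, ∃ n : ℤ, (g^[m] (0, y)).1 = n := by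
  by_contra! hne
  have hcont : Continuous fun y => (g (0, y)).1 := by
    have := hg.continuous
    fun_prop
  rcases forall_le_or_forall_ge_of_dense_of_ne hS hdense hcont
    (fun y hy => by simpa using hne y hy 1 one_ne_zero 0) with hnonneg | hnonpos
  · obtain ⟨y, hy, m, hm, n, hn⟩ :=
      hg.exists_axis_return_of_axis_nonneg hrec hS hdense hz hnonneg
    exact hne y hy m hm n hn
  · obtain ⟨y, hy, m, hm, n, hn⟩ :=
      hg.conj_mirror.exists_axis_return_of_axis_nonneg hrec.conj_mirror hS hdense
        (z := mirror z) (by simp [IsFixedPt, hz.eq]) (by simpa using hnonpos)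
    rw [mirror_iterate_conj, mirror_axis, mirror_fst, neg_eq_iff_eq_neg] at hn
    exact hne y hy m hm (-n) (by exact_mod_cast hn)

/-- Comparing the two relations forces `d ∘ d = id`, so `F ∘ F` lifts a map of degree one even if
`F` reverses the angle. -/
lemma comp_self_of_semiconj_shift [Nonempty Y] {F : Strip Y → Strip Y} (hF : Continuous F)
    (d : ℤ →+ ℤ) (hd : ∀ n, Semiconj F (shift n) (shift (d n))) {m : ℤ}
    (hm : ∀ x, F (mirror (F x)) = shift m (mirror x)) : IsReversibleLift (F ∘ F) := by
  have hdd : ∀ n, d (d n) = n := by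
    intro n
    let x : Strip Y := (0, Classical.arbitrary Y)
    have h := hm (shift n x)
    rw [(hd n).eq, mirror_shift, (hd _).eq, hm, mirror_shift, shift_shift, shift_shift] at h
    have hinj := shift_left_injective _ h
    rw [map_neg] at hinj
    linarith
  have hdm : d m + m = 0 := by
    let x : Strip Y := (0, Classical.arbitrary Y)
    have h := hm (mirror (F x))
    rw [hm x, mirror_shift, (hd _).eq, mirror_mirror, mirror_mirror] at h
    have hinj := shift_left_injective _ h
    rw [map_neg] at hinj
    linarith
  refine ⟨hF.comp hF, fun n x => ?_, fun x => ?_⟩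
  · simp only [comp_apply, (hd _).eq _, hdd]
  · simp only [comp_apply, hm, (hd _).eq _, shift_shift, hdm, shift_zero]

end IsReversibleLift

/-! ### The universal cover of the annulus -/

/-- The point `(x, y)` as the complex number `y + x i`; in this convention the reflection `refl2` is
complex conjugation. -/
def toComplex (p : ℝ × ℝ) : ℂ := ⟨p.2, p.1⟩

lemma toComplex_injective : Injective toComplex := fun _ _ h =>
  Prod.ext (congrArg Complex.im h) (congrArg Complex.re h)

lemma continuous_toComplex : Continuous toComplex :=
  Complex.equivRealProdCLM.symm.continuous.comp continuous_swap

lemma norm_toComplex (p : ℝ × ℝ) : ‖toComplex p‖ = enorm2 p := by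
  rw [Complex.norm_eq_sqrt_sq_add_sq, enorm2, add_comm, toComplex]

lemma toComplex_ne_zero (a : annulus) : toComplex a ≠ 0 := by
  rw [← norm_pos_iff, norm_toComplex]
  exact one_pos.trans_le a.2.1

lemma continuous_enorm2 : Continuous enorm2 := by
  unfold enorm2
  fun_prop

/-- The modulus of a point of the annulus, as a height in the strip. -/
def annulusRadius (a : annulus) : Icc (1 : ℝ) 2 := ⟨enorm2 a, a.2⟩

lemma continuous_annulusRadius : Continuous annulusRadius :=
  (continuous_enorm2.comp continuous_subtype_val).subtype_mk _

lemma enorm2_polar {r : ℝ} (hr : 0 ≤ r) (θ : ℝ) :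
    enorm2 (r * Real.sin θ, r * Real.cos θ) = r := by
  have hsq : (r * Real.sin θ) ^ 2 + (r * Real.cos θ) ^ 2 = r ^ 2 := by
    linear_combination r ^ 2 * Real.sin_sq_add_cos_sq θ
  rw [enorm2, hsq, Real.sqrt_sq hr]

/-- The universal covering map of the annulus in polar coordinates; the angle is measured in turns
from the positive `y`-axis, so that the axis of the strip lies over fixed points of the
reflection. -/
def cover (x : Strip (Icc (1 : ℝ) 2)) : annulus :=
  ⟨((x.2 : ℝ) * Real.sin (2 * Real.pi * x.1), (x.2 : ℝ) * Real.cos (2 * Real.pi * x.1)), by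
    rw [annulus, mem_ofPred_eq, enorm2_polar (zero_le_one.trans x.2.2.1)]
    exact x.2.2⟩

lemma enorm2_cover (x : Strip (Icc (1 : ℝ) 2)) : enorm2 (cover x) = x.2 :=
  enorm2_polar (zero_le_one.trans x.2.2.1) _

lemma toComplex_cover (x : Strip (Icc (1 : ℝ) 2)) :
    toComplex (cover x) = (x.2 : ℝ) * Complex.exp ((2 * Real.pi * x.1 : ℝ) * Complex.I) :=
  Complex.ext (by rw [Complex.re_ofReal_mul, Complex.exp_ofReal_mul_I_re]; rfl)
    (by rw [Complex.im_ofReal_mul, Complex.exp_ofReal_mul_I_im]; rfl)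

lemma continuous_cover : Continuous cover := by
  unfold cover
  fun_prop

lemma cover_mirror (x : Strip (Icc (1 : ℝ) 2)) : cover (mirror x) = IA (cover x) := by
  simp [cover, mirror, IA, refl2]

lemma cover_shift (n : ℤ) (x : Strip (Icc (1 : ℝ) 2)) : cover (shift n x) = cover x := by
  have hturn : 2 * Real.pi * (x.1 + n) = 2 * Real.pi * x.1 + n * (2 * Real.pi) := by ring
  simp [cover, shift, hturn, Real.sin_add_int_mul_two_pi, Real.cos_add_int_mul_two_pi]

lemma cover_eq_cover_iff {x y : Strip (Icc (1 : ℝ) 2)} :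
    cover x = cover y ↔ ∃ n : ℤ, x = shift n y := by
  refine ⟨fun h => ?_, fun ⟨n, hn⟩ => by rw [hn, cover_shift]⟩
  have hheight : x.2 = y.2 := Subtype.ext (by rw [← enorm2_cover, ← enorm2_cover, h])
  have hne : ((y.2 : ℝ) : ℂ) ≠ 0 := Complex.ofReal_ne_zero.2 (one_pos.trans_le y.2.2.1).ne'
  have hexp := congrArg (fun a : annulus => toComplex a) h
  simp only [toComplex_cover, hheight, mul_right_inj' hne] at hexp
  obtain ⟨n, hn⟩ := Complex.exp_eq_exp_iff_exists_int.1 hexp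
  have hangle : 2 * Real.pi * x.1 = 2 * Real.pi * (y.1 + n) := by
    apply Complex.ofReal_injective
    apply mul_right_cancel₀ Complex.I_ne_zero
    push_cast at hn ⊢
    linear_combination hn
  exact ⟨n, Prod.ext (mul_left_cancel₀ Real.two_pi_pos.ne' hangle) hheight⟩

lemma cover_eq_of_polar {a : annulus} {θ : ℝ}
    (h : toComplex a = enorm2 a * Complex.exp (θ * Complex.I)) :
    cover (θ / (2 * Real.pi), annulusRadius a) = a := by
  apply Subtype.ext
  apply toComplex_injective
  rw [toComplex_cover, mul_div_cancel₀ _ Real.two_pi_pos.ne', annulusRadius, h]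

lemma surjOn_cover : SurjOn cover (Icc 0 1 ×ˢ univ) univ := by
  intro a _
  have hpolar := (Complex.norm_mul_exp_arg_mul_I (toComplex a)).symm
  rw [norm_toComplex] at hpolar
  let x : Strip (Icc (1 : ℝ) 2) := (Complex.arg (toComplex a) / (2 * Real.pi), annulusRadius a)
  have hfract : (shift (-⌊x.1⌋) x).1 = Int.fract x.1 := by simp [Int.fract, sub_eq_add_neg]
  refine ⟨shift (-⌊x.1⌋) x, ⟨?_, mem_univ _⟩, by rw [cover_shift, cover_eq_of_polar hpolar]⟩
  rw [hfract]
  exact ⟨Int.fract_nonneg _, (Int.fract_lt_one _).le⟩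

lemma surjective_cover : Surjective cover :=
  surjOn_univ.1 (surjOn_cover.mono (subset_univ _) subset_rfl)

instance : CompactSpace annulus := by
  refine ⟨?_⟩
  rw [← surjOn_cover.image_eq_of_mapsTo (mapsTo_univ _ _)]
  exact (isCompact_Icc.prod isCompact_univ).image continuous_cover

lemma isQuotientMap_cover : Topology.IsQuotientMap cover := by
  let K : Set (Strip (Icc (1 : ℝ) 2)) := Icc 0 1 ×ˢ univ
  have : CompactSpace K := isCompact_iff_compactSpace.1 (isCompact_Icc.prod isCompact_univ)
  have hcont : Continuous fun x : K => cover x := continuous_cover.comp continuous_subtype_val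
  have hsurj : Surjective fun x : K => cover x := fun a =>
    let ⟨x, hx, hxa⟩ := surjOn_cover (mem_univ a)
    ⟨⟨x, hx⟩, hxa⟩
  exact .of_comp continuous_subtype_val continuous_cover (.of_surjective_continuous hsurj hcont)

lemma isOpenMap_cover : IsOpenMap cover := by
  intro U hU
  have hpre : cover ⁻¹' (cover '' U) = ⋃ n : ℤ, shift n ⁻¹' U := by
    ext x
    simp only [mem_preimage, mem_image, mem_iUnion, cover_eq_cover_iff]
    exact ⟨fun ⟨_, hy, n, hn⟩ => ⟨n, hn ▸ hy⟩, fun ⟨n, hn⟩ => ⟨_, hn, n, rfl⟩⟩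
  rw [← isQuotientMap_cover.isOpen_preimage, hpre]
  exact isOpen_iUnion fun n => hU.preimage (continuous_shift n)

lemma exists_continuous_log {X : Type*} [TopologicalSpace X] [SimplyConnectedSpace X]
    [LocallyPathConnectedSpace X] {u : X → ℂ} (hu : Continuous u) (hne : ∀ x, u x ≠ 0) :
    ∃ L : X → ℂ, Continuous L ∧ ∀ x, Complex.exp (L x) = u x := by
  let x₀ : X := Classical.arbitrary X
  obtain ⟨L, ⟨-, hL⟩, -⟩ := Complex.isCoveringMapOn_exp.existsUnique_continuousMap_lifts ⟨u, hu⟩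
    (a₀ := x₀) (Complex.exp_log (hne x₀)) hne
  exact ⟨L, L.continuous, congrFun hL⟩

lemma exists_continuous_lift {X : Type*} [TopologicalSpace X] [SimplyConnectedSpace X]
    [LocallyPathConnectedSpace X] {u : X → annulus} (hu : Continuous u) :
    ∃ v : X → Strip (Icc (1 : ℝ) 2), Continuous v ∧ ∀ x, cover (v x) = u x := by
  obtain ⟨L, hL, hexp⟩ := exists_continuous_log
    (continuous_toComplex.comp (continuous_subtype_val.comp hu)) fun x => toComplex_ne_zero (u x)
  refine ⟨fun x => ((L x).im / (2 * Real.pi), annulusRadius (u x)),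
    (Complex.continuous_im.comp hL).div_const _ |>.prodMk (continuous_annulusRadius.comp hu),
    fun x => cover_eq_of_polar ?_⟩
  have hnorm : Real.exp (L x).re = enorm2 (u x) := by
    rw [← Complex.norm_exp, hexp, comp_apply, comp_apply, norm_toComplex]
  calc toComplex (u x) = Complex.exp ((L x).re + (L x).im * Complex.I) := by
        rw [Complex.re_add_im, hexp, comp_apply, comp_apply]
    _ = enorm2 (u x) * Complex.exp ((L x).im * Complex.I) := by
        rw [Complex.exp_add, ← Complex.ofReal_exp, hnorm]

lemma exists_eq_shift_of_cover_eq {X : Type*} [TopologicalSpace X] [ConnectedSpace X]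
    {u v : X → Strip (Icc (1 : ℝ) 2)} (hu : Continuous u) (hv : Continuous v)
    (h : ∀ x, cover (u x) = cover (v x)) : ∃ n : ℤ, ∀ x, u x = shift n (v x) := by
  choose n hn using fun x => cover_eq_cover_iff.1 (h x)
  have hdiff : (fun x => (n x : ℝ)) = fun x => (u x).1 - (v x).1 := by
    funext x
    rw [hn x, shift_fst, add_sub_cancel_left]
  have hcont : Continuous n := by
    refine Int.isClosedEmbedding_coe_real.isInducing.continuous_iff.2 ?_
    change Continuous fun x => (n x : ℝ)
    rw [hdiff]
    fun_prop
  let x₀ : X := Classical.arbitrary X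
  exact ⟨n x₀, fun x => PreconnectedSpace.constant inferInstance hcont (x := x) (y := x₀) ▸ hn x⟩

instance : ContractibleSpace (Icc (1 : ℝ) 2) :=
  (convex_Icc 1 2).contractibleSpace (nonempty_Icc.2 one_le_two)

instance : LocallyPathConnectedSpace (Icc (1 : ℝ) 2) :=
  (convex_Icc 1 2).locallyPathConnectedSpace

lemma exists_degree {F : Strip (Icc (1 : ℝ) 2) → Strip (Icc (1 : ℝ) 2)} (hF : Continuous F)
    {f : annulus → annulus} (hlift : Semiconj cover F f) :
    ∃ d : ℤ →+ ℤ, ∀ n, Semiconj F (shift n) (shift (d n)) := by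
  have hexists : ∀ n : ℤ, ∃ d : ℤ, ∀ x, F (shift n x) = shift d (F x) := fun n =>
    exists_eq_shift_of_cover_eq (hF.comp (continuous_shift n)) hF fun x => by
      rw [hlift.eq, hlift.eq, cover_shift]
  choose d hd using hexists
  refine ⟨AddMonoidHom.mk' d fun m n => ?_, hd⟩
  apply shift_left_injective (F (Classical.arbitrary _))
  simp only [← hd, ← shift_shift]

lemma exists_isReversibleLift_sq {f : annulus → annulus} (hf : Continuous f)
    (hrev : IsReversible IA f) : ∃ g, IsReversibleLift g ∧ Semiconj cover g f^[2] := by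
  obtain ⟨F, hF, hlift⟩ := exists_continuous_lift (hf.comp continuous_cover)
  have hsemi : Semiconj cover F f := hlift
  obtain ⟨d, hd⟩ := exists_degree hF hsemi
  obtain ⟨m, hm⟩ := exists_eq_shift_of_cover_eq (hF.comp (continuous_mirror.comp hF))
    continuous_mirror fun x => by
      simp only [comp_apply, hsemi.eq, cover_mirror, hrev (cover x)]
  exact ⟨F ∘ F, .comp_self_of_semiconj_shift hF d hd hm, hsemi.comp_right hsemi⟩

lemma IsReversibleLift.exists_iterate_with_fixedPt
    {g : Strip (Icc (1 : ℝ) 2) → Strip (Icc (1 : ℝ) 2)} (hg : IsReversibleLift g)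
    {φ : annulus → annulus} (hsemi : Semiconj cover g φ) {k : ℕ} {a : annulus}
    (ha : IsPeriodicPt φ k a) :
    ∃ h, IsReversibleLift h ∧ Semiconj cover h φ^[k] ∧ ∃ z, IsFixedPt h z := by
  obtain ⟨z, rfl⟩ := surjective_cover a
  obtain ⟨n, hn⟩ := cover_eq_cover_iff.1 (((hsemi.iterate_right k).eq z).trans ha.eq)
  refine ⟨shift (-n) ∘ g^[k], (hg.iterate k).shift_comp (-n), fun x => ?_, z, ?_⟩
  · rw [comp_apply, cover_shift, (hsemi.iterate_right k).eq]
  · rw [IsFixedPt, comp_apply, hn, shift_shift, neg_add_cancel, shift_zero]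

lemma isNonwandering_of_conservative {μ : Measure annulus} [μ.IsOpenPosMeasure]
    {φ : annulus → annulus} (hφ : Conservative φ μ)
    {g : Strip (Icc (1 : ℝ) 2) → Strip (Icc (1 : ℝ) 2)} (hsemi : Semiconj cover g φ) :
    IsNonwandering g := by
  intro U hU hne
  have hopen := isOpenMap_cover U hU
  obtain ⟨_, ⟨x, hx, rfl⟩, m, hm, y, hy, hret⟩ := hφ.exists_mem_iterate_mem
    hopen.measurableSet.nullMeasurableSet (hopen.measure_ne_zero μ (hne.image cover))
  obtain ⟨n, rfl⟩ := cover_eq_cover_iff.1 (hret.trans ((hsemi.iterate_right m).eq x).symm)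
  exact ⟨x, hx, m, hm, n, hy⟩

lemma image_val_preimage_Ioo :
    ((↑) : Icc (1 : ℝ) 2 → ℝ) '' ((↑) ⁻¹' Ioo (1 : ℝ) 2) = Ioo 1 2 :=
  Subtype.image_preimage_val _ _ |>.trans (inter_eq_right.2 Ioo_subset_Icc_self)

lemma dense_preimage_Ioo : Dense ((↑) ⁻¹' Ioo (1 : ℝ) 2 : Set (Icc (1 : ℝ) 2)) := by
  rw [Subtype.dense_iff, image_val_preimage_Ioo, closure_Ioo one_lt_two.ne]

lemma isPreconnected_preimage_Ioo :
    IsPreconnected ((↑) ⁻¹' Ioo (1 : ℝ) 2 : Set (Icc (1 : ℝ) 2)) := by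
  rw [← Topology.IsInducing.subtypeVal.isPreconnected_image, image_val_preimage_Ioo]
  exact isPreconnected_Ioo

lemma cover_mem_annulusInt {x : Strip (Icc (1 : ℝ) 2)} (hx : (x.2 : ℝ) ∈ Ioo (1 : ℝ) 2) :
    (cover x : ℝ × ℝ) ∈ annulusInt := by
  simpa only [annulusInt, mem_ofPred_eq, enorm2_cover, mem_Ioo] using hx

lemma IsReversibleLift.exists_fixedPt_IA_return
    {g : Strip (Icc (1 : ℝ) 2) → Strip (Icc (1 : ℝ) 2)} (hg : IsReversibleLift g)
    (hrec : IsNonwandering g) {z : Strip (Icc (1 : ℝ) 2)} (hz : IsFixedPt g z)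
    {φ : annulus → annulus} (hsemi : Semiconj cover g φ) :
    ∃ a : annulus, (a : ℝ × ℝ) ∈ annulusInt ∧ IsFixedPt IA a ∧
      ∃ m ≠ 0, IsFixedPt IA (φ^[m] a) := by
  have hfix : ∀ r, IsFixedPt IA (cover (0, r)) := fun r => by
    rw [IsFixedPt, ← cover_mirror, mirror_axis]
  obtain ⟨r, hr, m, hm, n, hn⟩ := hg.exists_axis_return hrec isPreconnected_preimage_Ioo
    dense_preimage_Ioo hz
  refine ⟨cover (0, r), cover_mem_annulusInt hr, hfix r, m, hm, ?_⟩
  have hturn : g^[m] (0, r) = shift n (0, (g^[m] (0, r)).2) := Prod.ext (by simp [hn]) rfl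
  rw [← (hsemi.iterate_right m).eq, hturn, cover_shift]
  exact hfix _

/-! ### Recurrence for Lebesgue measure on the annulus -/

lemma isOpenPosMeasure_comap_subtype_val {X : Type*} [TopologicalSpace X] [MeasurableSpace X]
    (μ : Measure X) [μ.IsOpenPosMeasure] {s : Set X} (hs : MeasurableSet s)
    (hreg : s ⊆ closure (interior s)) :
    (μ.comap (Subtype.val : s → X)).IsOpenPosMeasure := by
  refine ⟨fun U hU ⟨x, hxU⟩ => ?_⟩
  obtain ⟨O, hO, rfl⟩ := isOpen_induced_iff.1 hU
  have hne : (O ∩ interior s).Nonempty := mem_closure_iff.1 (hreg x.2) O hO hxU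
  rw [(MeasurableEmbedding.subtype_coe hs).comap_apply, Subtype.image_preimage_val]
  refine ((hO.inter isOpen_interior).measure_pos μ hne |>.trans_le (measure_mono ?_)).ne'
  exact fun y hy => ⟨interior_subset hy.2, hy.1⟩

lemma isClosed_annulus : IsClosed annulus := isClosed_Icc.preimage continuous_enorm2

lemma isOpen_annulusInt : IsOpen annulusInt := isOpen_Ioo.preimage continuous_enorm2

lemma annulus_subset_closure_interior : annulus ⊆ closure (interior annulus) := by
  have hsub : annulusInt ⊆ interior annulus :=
    interior_maximal (fun _ h => ⟨h.1.le, h.2.le⟩) isOpen_annulusInt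
  have hdense : Dense ((univ : Set ℝ) ×ˢ ((↑) ⁻¹' Ioo (1 : ℝ) 2 : Set (Icc (1 : ℝ) 2))) :=
    dense_univ.prod dense_preimage_Ioo
  intro p hp
  obtain ⟨x, hx⟩ := surjective_cover ⟨p, hp⟩
  have hmem := (continuous_subtype_val.comp continuous_cover).range_subset_closure_image_dense
    hdense ⟨x, congrArg Subtype.val hx⟩
  refine closure_mono ?_ hmem
  rintro _ ⟨y, hy, rfl⟩
  exact hsub (cover_mem_annulusInt hy.2)

instance : ((volume : Measure (ℝ × ℝ)).comap (Subtype.val : annulus → ℝ × ℝ)).IsOpenPosMeasure :=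
  isOpenPosMeasure_comap_subtype_val _ isClosed_annulus.measurableSet
    annulus_subset_closure_interior

instance : IsFiniteMeasureOnCompacts
    ((volume : Measure (ℝ × ℝ)).comap (Subtype.val : annulus → ℝ × ℝ)) :=
  .comap' _ continuous_subtype_val (.subtype_coe isClosed_annulus.measurableSet)

theorem periodic_point_gives_interior_symmetric_periodic_point_general
    {μ : Measure annulus} [μ.IsOpenPosMeasure] (f : annulus ≃ₜ annulus)
    (hrev : ∀ z : annulus, f (IA z) = IA (f.symm z)) (hcons : Conservative f μ)
    (hper : ∃ (z : annulus) (k : ℕ), 1 ≤ k ∧ (⇑f)^[k] z = z) :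
    ∃ z : annulus, (z : ℝ × ℝ) ∈ annulusInt ∧
      (∃ k : ℕ, 1 ≤ k ∧ (⇑f)^[k] z = z) ∧
      (∃ l : ℕ, 1 ≤ l ∧ (⇑f)^[l] z = IA z) := by
  have hreversible : IsReversible IA f := fun z => by rw [hrev, f.symm_apply_apply]
  obtain ⟨a, k, hk, ha⟩ := hper
  have hsq : IsPeriodicPt f^[2] k a := IsPeriodicPt.iterate ha 2
  obtain ⟨g, hg, hgf⟩ := exists_isReversibleLift_sq f.continuous hreversible
  obtain ⟨h, hh, hhf, z, hz⟩ := hg.exists_iterate_with_fixedPt hgf hsq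
  have hrec := isNonwandering_of_conservative ((hcons.iterate 2).iterate k) hhf
  obtain ⟨x, hx, hfix, m, hm, hret⟩ := hh.exists_fixedPt_IA_return hrec hz hhf
  rw [← iterate_mul, ← iterate_mul] at hret
  have hperiod := hreversible.isPeriodicPt_add_self hfix hret
  have hpos : 1 ≤ 2 * (k * m) + 2 * (k * m) := by
    have := Nat.mul_pos hk (Nat.pos_of_ne_zero hm)
    omega
  exact ⟨x, hx, ⟨_, hpos, hperiod⟩, _, hpos, hperiod.trans hfix.symm⟩

/-- **Proposition 5.1.** If an area preserving reversible homeomorphism of the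
closed annulus has a periodic point, then it has an interior symmetric periodic
point. -/
theorem periodic_point_gives_interior_symmetric_periodic_point
    (f : annulus ≃ₜ annulus)
    (hrev : ∀ z : annulus, f (IA z) = IA (f.symm z))
    (harea : MeasurePreserving f
      ((volume : Measure (ℝ × ℝ)).comap (Subtype.val : annulus → ℝ × ℝ))
      ((volume : Measure (ℝ × ℝ)).comap (Subtype.val : annulus → ℝ × ℝ)))
    (hper : ∃ (z : annulus) (k : ℕ), 1 ≤ k ∧ (⇑f)^[k] z = z) :
    ∃ z : annulus, (z : ℝ × ℝ) ∈ annulusInt ∧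
      (∃ k : ℕ, 1 ≤ k ∧ (⇑f)^[k] z = z) ∧
      (∃ l : ℕ, 1 ≤ l ∧ (⇑f)^[l] z = IA z) :=
  periodic_point_gives_interior_symmetric_periodic_point_general f hrev harea.conservative hper
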